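/- arXiv:1710.05731 — 2 statements merged into one kernel-verified Lean document; each statement's English description precedes it below -/
import Mathlib

section
/- For any tree T_m on m vertices and any n ≥ 1, R(T_m, K_n) = (m − 1)(n − 1) + 1. -/
/-- The graph Ramsey number `R(G₁, G₂)`: least `p` such that every red/blue coloring of the
edges of `K_p` contains a red copy of `G₁` or a blue copy of `G₂`. -/
noncomputable def graphRamsey {V1 V2 : Type*} (G1 : SimpleGraph V1) (G2 : SimpleGraph V2) : ℕ :=
  sInf {p | ∀ c : Sym2 (Fin p) → Bool,
    (∃ f : V1 → Fin p, Function.Injective f ∧ ∀ a b, G1.Adj a b → c s(f a, f b) = true) ∨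
    (∃ f : V2 → Fin p, Function.Injective f ∧ ∀ a b, G2.Adj a b → c s(f a, f b) = false)}

open Classical in
/-- Greedy embedding: a tree on `k + 1` vertices embeds into a nonempty finite vertex set `S` in
which every vertex has at least `k` neighbours. -/
theorem exists_tree_embedding_of_le_degree {W : Type*} (G : SimpleGraph W) (S : Finset W)
    (hS : S.Nonempty) (k : ℕ) (hdeg : ∀ x ∈ S, k ≤ (S.filter (G.Adj x)).card)
    {V : Type*} [Fintype V] (T : SimpleGraph V) (hT : T.IsTree) (hV : Fintype.card V = k + 1) :
    ∃ f : V → W, Function.Injective f ∧ (∀ v, f v ∈ S) ∧ ∀ a b, T.Adj a b → G.Adj (f a) (f b) := by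
  induction k generalizing V with
  | zero =>
    obtain ⟨x, hx⟩ := hS
    have : Subsingleton V := Fintype.card_le_one_iff_subsingleton.mp hV.le
    exact ⟨fun _ => x, Function.injective_of_subsingleton _, fun _ => hx,
      fun a b hab => (hab.ne (Subsingleton.elim a b)).elim⟩
  | succ k ih =>
    have : Nontrivial V := Fintype.one_lt_card_iff_nontrivial.mp (by omega)
    obtain ⟨l, hl⟩ := hT.exists_vert_degree_one_of_nontrivial
    have htree : (T.induce {l}ᶜ).IsTree :=
      ⟨hT.1.induce_compl_singleton_of_degree_eq_one hl, hT.2.induce _⟩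
    have hcard : Fintype.card ({l}ᶜ : Set V) = k + 1 := by
      rw [Fintype.card_compl_set]; simp [hV]
    obtain ⟨f, hf, hfS, hfG⟩ := ih (fun x hx => by have := hdeg x hx; omega) _ htree hcard
    obtain ⟨u, hlu, hu⟩ := SimpleGraph.degree_eq_one_iff_existsUnique_adj.mp hl
    let u' : ({l}ᶜ : Set V) := ⟨u, hlu.ne'⟩
    obtain ⟨y, hy, hyf⟩ : ∃ y ∈ S.filter (G.Adj (f u')),
        y ∉ (Finset.univ.image f).erase (f u') := by
      apply Finset.exists_mem_notMem_of_card_lt_card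
      rw [Finset.card_erase_of_mem (by simp), Finset.card_image_of_injective _ hf,
        Finset.card_univ, hcard]
      exact lt_of_lt_of_le (by omega) (hdeg _ (hfS u'))
    rw [Finset.mem_filter] at hy
    have hyf : ∀ v, f v ≠ y := by
      intro v hv
      apply hyf
      simp only [Finset.mem_erase, Finset.mem_image, Finset.mem_univ, true_and]
      exact ⟨hy.2.ne', v, hv⟩
    refine ⟨fun v => if h : v = l then y else f ⟨v, h⟩, ?_, ?_, ?_⟩
    · intro a b hab
      by_cases ha : a = l <;> by_cases hb : b = l
      · rw [ha, hb]
      · simp only [ha, hb, dite_true, dite_false] at hab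
        exact (hyf _ hab.symm).elim
      · simp only [ha, hb, dite_true, dite_false] at hab
        exact (hyf _ hab).elim
      · simp only [ha, hb, dite_false] at hab
        exact congrArg Subtype.val (hf hab)
    · intro v
      by_cases hv : v = l
      · simpa [hv] using hy.1
      · simpa [hv] using hfS _
    · intro a b hab
      by_cases ha : a = l <;> by_cases hb : b = l
      · exact (hab.ne (ha.trans hb.symm)).elim
      · subst ha
        obtain rfl := hu b hab
        simpa [hb] using hy.2.symm
      · subst hb
        obtain rfl := hu a hab.symm
        simpa [ha] using hy.2
      · simpa [ha, hb] using hfG ⟨a, ha⟩ ⟨b, hb⟩ hab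

open Classical in
/-- A finite vertex set with more than `k * n` vertices contains a tree on `k + 1` vertices or
an independent set of `n + 1` vertices. -/
theorem exists_tree_embedding_or_isIndepSet {W : Type*} (G : SimpleGraph W) {V : Type*} [Fintype V]
    (T : SimpleGraph V) (hT : T.IsTree) (k : ℕ) (hV : Fintype.card V = k + 1) (n : ℕ)
    (S : Finset W) (hS : k * n < S.card) :
    (∃ f : V → W, Function.Injective f ∧ ∀ a b, T.Adj a b → G.Adj (f a) (f b)) ∨
      ∃ I ⊆ S, I.card = n + 1 ∧ G.IsIndepSet (I : Set W) := by
  induction n generalizing S with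
  | zero =>
    obtain ⟨x, hx⟩ := Finset.card_pos.mp (by omega : 0 < S.card)
    exact .inr ⟨{x}, by simpa using hx, by simp, by simp [SimpleGraph.IsIndepSet]⟩
  | succ n ih =>
    by_cases hdeg : ∀ x ∈ S, k ≤ (S.filter (G.Adj x)).card
    · obtain ⟨f, hf, -, hfG⟩ := exists_tree_embedding_of_le_degree G S
        (Finset.card_pos.mp (by omega)) k hdeg T hT hV
      exact .inl ⟨f, hf, hfG⟩
    · push Not at hdeg
      obtain ⟨x, hx, hxk⟩ := hdeg
      have hcard : k * n < (S \ insert x (S.filter (G.Adj x))).card := by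
        have h₁ := Finset.le_card_sdiff (insert x (S.filter (G.Adj x))) S
        have h₂ := Finset.card_insert_le x (S.filter (G.Adj x))
        rw [Nat.mul_succ] at hS
        omega
      obtain h | ⟨I, hIS, hI, hind⟩ := ih _ hcard
      · exact .inl h
      · have hIx : ∀ y ∈ I, y ∈ S ∧ y ≠ x ∧ ¬ G.Adj x y := by
          intro y hy
          have := hIS hy
          simp only [Finset.mem_sdiff, Finset.mem_insert, Finset.mem_filter] at this
          tauto
        refine .inr ⟨insert x I, ?_, ?_, ?_⟩
        · exact Finset.insert_subset hx fun y hy => (hIx y hy).1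
        · rw [Finset.card_insert_of_notMem fun h => (hIx x h).2.1 rfl, hI]
        · rw [Finset.coe_insert]
          refine Set.Pairwise.insert hind fun y hy _ => ⟨(hIx y hy).2.2, fun h => ?_⟩
          exact (hIx y hy).2.2 h.symm

/-- A function constant along the edges of a connected graph is constant. -/
theorem SimpleGraph.Connected.eq_of_forall_adj_eq {V α : Type*} {G : SimpleGraph V}
    (hG : G.Connected) (g : V → α) (h : ∀ a b, G.Adj a b → g a = g b) (a b : V) : g a = g b := by
  obtain ⟨w⟩ := hG.preconnected a b
  induction w with
  | nil => rfl
  | cons hab _ ih => exact (h _ _ hab).trans ih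

theorem stmt_1 (m n : ℕ) (hn : 1 ≤ n) {V : Type*} [Fintype V]
    (T : SimpleGraph V) (hT : T.IsTree) (hm : Fintype.card V = m) :
    graphRamsey T (⊤ : SimpleGraph (Fin n)) = (m - 1) * (n - 1) + 1 := by
  have : Nonempty V := hT.1.nonempty
  have hmpos : 0 < m := hm ▸ Fintype.card_pos
  obtain ⟨k, rfl⟩ : ∃ k, m = k + 1 := ⟨m - 1, by omega⟩
  obtain ⟨n, rfl⟩ : ∃ j, n = j + 1 := ⟨n - 1, by omega⟩
  simp only [Nat.add_sub_cancel]
  refine IsLeast.csInf_eq ⟨fun c => ?_, fun p hp => ?_⟩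
  · let G : SimpleGraph (Fin (k * n + 1)) :=
      { Adj := fun x y => x ≠ y ∧ c s(x, y) = true
        symm := ⟨fun x y h => ⟨h.1.symm, Sym2.eq_swap ▸ h.2⟩⟩
        loopless := ⟨fun x h => h.1 rfl⟩ }
    obtain ⟨f, hf, hfG⟩ | ⟨I, -, hI, hind⟩ :=
      exists_tree_embedding_or_isIndepSet G T hT k hm n Finset.univ (by simp)
    · exact .inl ⟨f, hf, fun a b hab => (hfG a b hab).2⟩
    · refine .inr ⟨I.orderEmbOfFin hI, (I.orderEmbOfFin hI).injective, fun a b hab => ?_⟩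
      have hne := (I.orderEmbOfFin hI).injective.ne hab.ne
      have := hind (I.orderEmbOfFin_mem hI a) (I.orderEmbOfFin_mem hI b) hne
      simpa [G, hne] using this
  · by_contra! hlt
    have hpk : p ≤ k * n := by omega
    obtain ⟨f, hf, hfc⟩ | ⟨f, hf, hfc⟩ := hp <| Sym2.lift
      ⟨fun x y => decide (x.val / k = y.val / k), fun x y => by simp only [eq_comm]⟩
    · have hconst := hT.1.eq_of_forall_adj_eq (fun v => (f v).val / k) fun a b hab => by
        simpa using hfc a b hab
      have hk : 0 < k := Nat.pos_of_ne_zero fun h => by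
        have := (f (Classical.arbitrary V)).isLt
        simp [h] at hpk
        omega
      have hinj : Function.Injective fun v => (⟨(f v).val % k, Nat.mod_lt _ hk⟩ : Fin k) := by
        intro a b hab
        apply hf
        apply Fin.ext
        rw [← Nat.div_add_mod (f a).val k, ← Nat.div_add_mod (f b).val k, hconst a b,
          Fin.mk.inj hab]
      have := Fintype.card_le_of_injective _ hinj
      simp [hm] at this
    · have hblock : ∀ i, (f i).val / k < n := fun i =>
        Nat.div_lt_of_lt_mul ((f i).isLt.trans_le hpk)
      have hinj : Function.Injective fun i => (⟨(f i).val / k, hblock i⟩ : Fin n) := by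
        intro a b hab
        by_contra hne
        have := hfc a b hne
        simp only [Sym2.lift_mk, decide_eq_false_iff_not] at this
        exact this (Fin.mk.inj hab)
      have := Fintype.card_le_of_injective _ hinj
      simp at this
end

section
/- Let n ≥ r ≥ 2 and suppose r − 1 divides n − 1. Then every r-uniform tree T_m^{(r)} on m vertices satisfies R(T_m^{(r)}, K_n^{(r)}; r) = (m−1)(n−1)/(r−1) + 1; in particular such trees are n-good. -/
/-- `IsTreeList r l` : the list of hyperedges `l` builds an `r`-uniform tree
hyperedge-by-hyperedge, each new hyperedge meeting the union of the previous
hyperedges in exactly one vertex. -/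
inductive IsTreeList (r : ℕ) {V : Type*} [DecidableEq V] : List (Finset V) → Prop
  | single (e : Finset V) (he : e.card = r) : IsTreeList r [e]
  | cons (e : Finset V) (l : List (Finset V)) (hl : IsTreeList r l) (he : e.card = r)
      (hint : (e ∩ l.foldr (· ∪ ·) ∅).card = 1) : IsTreeList r (e :: l)

/-- `hRamsey E r n` is the Ramsey number `R(H, K_n^{(r)}; r)` where `H` is the
hypergraph with vertex type `V` and hyperedge set `E`. -/
noncomputable def hRamsey {V : Type*} [DecidableEq V] (E : Set (Finset V)) (r n : ℕ) : ℕ :=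
  sInf {p | ∀ c : Finset (Fin p) → Bool,
    (∃ f : V → Fin p, Function.Injective f ∧ ∀ e ∈ E, c (e.image f) = true) ∨
    (∃ g : Fin n → Fin p, Function.Injective g ∧
      ∀ e : Finset (Fin n), e.card = r → c (e.image g) = false)}

/-- A map can be redefined on a finite set `A` so that it sends `A` bijectively onto a prescribed
set `B` of the same size. -/
theorem exists_eq_off_injOn_image_eq {V α : Type*} [DecidableEq V] [DecidableEq α]
    (A : Finset V) (B : Finset α) (hAB : A.card = B.card) (f : V → α) :
    ∃ g : V → α, (∀ y ∉ A, g y = f y) ∧ Set.InjOn g A ∧ A.image g = B := by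
  classical
  let φ := Finset.equivOfCardEq hAB
  refine ⟨fun y => if h : y ∈ A then (φ ⟨y, h⟩ : α) else f y, fun y hy => by simp [hy], ?_, ?_⟩
  · intro x hx y hy hxy
    have hx' : x ∈ A := hx
    have hy' : y ∈ A := hy
    simp only [hx', hy', dif_pos] at hxy
    simpa using φ.injective (Subtype.ext hxy)
  · ext b
    simp only [Finset.mem_image]
    constructor
    · rintro ⟨y, hy, rfl⟩
      simp [hy]
    · intro hb
      refine ⟨φ.symm ⟨b, hb⟩, (φ.symm ⟨b, hb⟩).2, ?_⟩
      simp

/-- If every large enough set `S` has an element `v` with `P v S`, and `P v` is monotone, then a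
large set contains a set `B` of `j` elements such that each nonempty `e ⊆ B` has an element `v`
for which `P v` holds on `S` even after deleting the other elements of `e`. -/
theorem exists_subset_forall_exists_sdiff {α : Type*} [DecidableEq α] (P : α → Finset α → Prop)
    (hmono : ∀ v S S', S ⊆ S' → P v S → P v S') (s : ℕ)
    (hP : ∀ S : Finset α, s ≤ S.card → ∃ v ∈ S, P v S) (j : ℕ) :
    ∀ S : Finset α, s + j ≤ S.card + 1 →
      ∃ B ⊆ S, B.card = j ∧ ∀ e ⊆ B, e.Nonempty → ∃ v ∈ e, P v (S \ e.erase v) := by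
  induction j with
  | zero =>
    intro S _
    refine ⟨∅, by simp, rfl, fun e he hne => ?_⟩
    simp [Finset.subset_empty.mp he] at hne
  | succ j ih =>
    intro S hS
    obtain ⟨v, hv, hPv⟩ := hP S (by omega)
    obtain ⟨B, hBS, hBc, hB⟩ := ih (S.erase v) (by
      have := Finset.card_erase_add_one hv
      omega)
    have hvB : v ∉ B := fun h => by simpa using hBS h
    refine ⟨insert v B, ?_, by simp [hvB, hBc], fun e he hne => ?_⟩
    · exact Finset.insert_subset hv (hBS.trans (Finset.erase_subset _ _))
    · by_cases hne' : (e.erase v).Nonempty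
      · obtain ⟨w, hw, hPw⟩ := hB (e.erase v) (Finset.subset_insert_iff.mp he) hne'
        refine ⟨w, Finset.mem_of_mem_erase hw, hmono _ _ _ ?_ hPw⟩
        intro x hx
        simp only [Finset.mem_sdiff, Finset.mem_erase] at hx ⊢
        tauto
      · rw [Finset.not_nonempty_iff_eq_empty] at hne'
        obtain ⟨w, hw⟩ := hne
        have hwv : w = v := by
          by_contra hwv
          have := Finset.mem_erase.mpr ⟨hwv, hw⟩
          simp [hne'] at this
        subst hwv
        exact ⟨w, hw, hmono _ _ _ (by simp [hne']) hPv⟩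

namespace IsTreeList

variable {r : ℕ} {V : Type*} [DecidableEq V] {l : List (Finset V)}

theorem le_card_foldr (hl : IsTreeList r l) : r ≤ (l.foldr (· ∪ ·) ∅).card := by
  cases hl with
  | single e he => simp [he]
  | cons e l hl he hint =>
    rw [← he]
    exact Finset.card_le_card (by simp)

/-- If every `(r - 1) k + 1` points span a red edge, then a red copy of the tree lies in every
set of at least `(m - 1) k + 1` points. -/
theorem exists_embedding {α : Type*} [DecidableEq α] (hr : 1 ≤ r) (k : ℕ)
    (c : Finset α → Bool)
    (hc : ∀ B : Finset α, B.card = (r - 1) * k + 1 → ∃ e ⊆ B, e.card = r ∧ c e = true)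
    (hl : IsTreeList r l) :
    ∀ S : Finset α, ((l.foldr (· ∪ ·) ∅).card - 1) * k + 1 ≤ S.card →
      ∃ f : V → α, Set.InjOn f (l.foldr (· ∪ ·) ∅ : Finset V) ∧
        (∀ x ∈ l.foldr (· ∪ ·) ∅, f x ∈ S) ∧ ∀ e ∈ l, c (e.image f) = true := by
  induction hl with
  | single e he =>
    intro S hS
    simp only [List.foldr_cons, List.foldr_nil, Finset.union_empty, he] at hS ⊢
    obtain ⟨B, hBS, hB⟩ := Finset.exists_subset_card_eq hS
    obtain ⟨E, hEB, hE, hcE⟩ := hc B hB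
    obtain ⟨a, -⟩ := Finset.card_pos.mp (by omega : 0 < E.card)
    obtain ⟨f, -, hinj, him⟩ := exists_eq_off_injOn_image_eq e E (he.trans hE.symm) (fun _ => a)
    refine ⟨f, hinj, fun x hx => hBS (hEB ?_), ?_⟩
    · rw [← him]
      exact Finset.mem_image_of_mem f hx
    · simp [him, hcE]
  | cons e l hl he hint ih =>
    intro S hS
    have hU := hl.le_card_foldr
    rw [List.foldr_cons] at hS ⊢
    generalize hUdef : l.foldr (· ∪ ·) ∅ = U at *
    obtain ⟨x, hx⟩ := Finset.card_eq_one.mp hint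
    have hxe : x ∈ e := Finset.mem_of_mem_inter_left (hx ▸ Finset.mem_singleton_self x)
    have hxU : x ∈ U := Finset.mem_of_mem_inter_right (hx ▸ Finset.mem_singleton_self x)
    have honly : ∀ y ∈ e, y ∈ U → y = x := fun y h₁ h₂ => by
      simpa [hx] using Finset.mem_inter.mpr ⟨h₁, h₂⟩
    have hcard := Finset.card_union_add_card_inter e U
    obtain ⟨B, hBS, hBc, hB⟩ := exists_subset_forall_exists_sdiff
      (fun v S => ∃ f : V → α, f x = v ∧ Set.InjOn f U ∧ (∀ y ∈ U, f y ∈ S) ∧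
        ∀ e ∈ l, c (e.image f) = true)
      (fun v S S' hSS' ⟨f, h₁, h₂, h₃, h₄⟩ => ⟨f, h₁, h₂, fun y hy => hSS' (h₃ y hy), h₄⟩)
      ((U.card - 1) * k + 1)
      (fun S hS => by
        obtain ⟨f, h₁, h₂, h₃⟩ := ih S hS
        exact ⟨f x, h₂ x hxU, f, rfl, h₁, h₂, h₃⟩)
      ((r - 1) * k + 1) S (by
        have : (e ∪ U).card - 1 = (U.card - 1) + (r - 1) := by omega
        rw [this, add_mul] at hS
        omega)
    obtain ⟨E, hEB, hE, hcE⟩ := hc B hBc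
    obtain ⟨v, hvE, f, hfx, hinj, hfS, hfc⟩ := hB E hEB (Finset.card_pos.mp (by omega))
    obtain ⟨g, hgf, hginj, hgim⟩ := exists_eq_off_injOn_image_eq (e.erase x) (E.erase v)
      (by rw [Finset.card_erase_of_mem hxe, Finset.card_erase_of_mem hvE, he, hE]) f
    have hgU : ∀ y ∈ U, g y = f y := fun y hy => hgf y fun h =>
      (Finset.mem_erase.mp h).1 (honly y (Finset.mem_of_mem_erase h) hy)
    have hge : ∀ y ∈ e.erase x, g y ∈ E.erase v := fun y hy =>
      hgim ▸ Finset.mem_image_of_mem g hy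
    have hsplit : ∀ y ∈ e ∪ U, y ∈ e.erase x ∨ y ∈ U := fun y hy => by
      by_cases hyx : y = x
      · exact Or.inr (hyx ▸ hxU)
      · simpa [hyx] using hy
    have hcross : ∀ y ∈ e.erase x, ∀ z ∈ U, g y ≠ g z := fun y hy z hz h =>
      (Finset.mem_sdiff.mp (hfS z hz)).2 (hgU z hz ▸ h ▸ hge y hy)
    refine ⟨g, ?_, ?_, ?_⟩
    · intro y hy z hz hyz
      rcases hsplit y hy with hy | hy <;> rcases hsplit z hz with hz | hz
      · exact hginj hy hz hyz
      · exact absurd hyz (hcross y hy z hz)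
      · exact absurd hyz.symm (hcross z hz y hy)
      · exact hinj hy hz (by rw [← hgU y hy, ← hgU z hz, hyz])
    · intro y hy
      rcases hsplit y hy with hy | hy
      · exact hBS (hEB (Finset.mem_of_mem_erase (hge y hy)))
      · rw [hgU y hy]
        exact (Finset.mem_sdiff.mp (hfS y hy)).1
    · intro d hd
      rcases List.mem_cons.mp hd with rfl | hd
      · rw [← Finset.insert_erase hxe, Finset.image_insert, hgim, hgU x hxU, hfx,
          Finset.insert_erase hvE, hcE]
      · have hdU : ∀ y ∈ d, y ∈ U := by
          subst hUdef
          clear * - hd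
          induction l with
          | nil => simp at hd
          | cons a l ih =>
            intro y hy
            rcases List.mem_cons.mp hd with rfl | hd
            · simp [hy]
            · exact Finset.mem_union_right _ (ih hd y hy)
        rw [Finset.image_congr fun y hy => hgU y (hdU y hy)]
        exact hfc d hd

/-- A function that is constant on each edge of a tree is constant on its vertices. -/
theorem eq_of_forall_edge_eq {β : Type*} (hl : IsTreeList r l) (φ : V → β)
    (h : ∀ e ∈ l, ∀ x ∈ e, ∀ y ∈ e, φ x = φ y) :
    ∀ x ∈ l.foldr (· ∪ ·) ∅, ∀ y ∈ l.foldr (· ∪ ·) ∅, φ x = φ y := by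
  induction hl with
  | single e he => simpa using h
  | cons e l hl he hint ih =>
    have ih := ih fun d hd => h d (List.mem_cons_of_mem e hd)
    have he := h e List.mem_cons_self
    rw [List.foldr_cons]
    generalize l.foldr (· ∪ ·) ∅ = U at *
    obtain ⟨v, hv⟩ := Finset.card_pos.mp (by omega : 0 < (e ∩ U).card)
    obtain ⟨hve, hvU⟩ := Finset.mem_inter.mp hv
    have key : ∀ x ∈ e ∪ U, φ x = φ v := fun x hx =>
      (Finset.mem_union.mp hx).elim (fun hx => he x hx v hve) fun hx => ih x hx v hvU
    intro x hx y hy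
    rw [key x hx, key y hy]

end IsTreeList

theorem stmt_14 (r n m : ℕ) (hr : 2 ≤ r) (hn : r ≤ n) (hdvd : (r - 1) ∣ (n - 1))
    {V : Type*} [Fintype V] [DecidableEq V]
    -- `T_m^{(r)}`: an `r`-uniform tree on the `m` vertices of `V`:
    (l : List (Finset V)) (hl : IsTreeList r l) (hcover : l.foldr (· ∪ ·) ∅ = Finset.univ)
    (hm : Fintype.card V = m) :
    hRamsey {e | e ∈ l} r n = (m - 1) * ((n - 1) / (r - 1)) + 1 := by
  obtain ⟨k, hk⟩ := hdvd
  rw [hk, Nat.mul_div_cancel_left k (by omega)]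
  have hnk : n = (r - 1) * k + 1 := by omega
  have hrm : r ≤ m := by simpa [hcover, hm] using hl.le_card_foldr
  have hupper : (m - 1) * k + 1 ∈ {p | ∀ c : Finset (Fin p) → Bool,
      (∃ f : V → Fin p, Function.Injective f ∧ ∀ e ∈ {e | e ∈ l}, c (e.image f) = true) ∨
      (∃ g : Fin n → Fin p, Function.Injective g ∧
        ∀ e : Finset (Fin n), e.card = r → c (e.image g) = false)} := by
    intro c
    by_contra! hcon
    obtain ⟨hf, hg⟩ := hcon
    obtain ⟨f, hinj, -, hfc⟩ := hl.exists_embedding (by omega) k c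
      (fun B hB => by
        obtain ⟨e, he, hce⟩ := hg (B.orderEmbOfFin (hB.trans hnk.symm))
          (B.orderEmbOfFin _).injective
        refine ⟨_, ?_, ?_, by simpa using hce⟩
        · intro x hx
          obtain ⟨i, -, rfl⟩ := Finset.mem_image.mp hx
          exact Finset.orderEmbOfFin_mem B _ i
        · rw [Finset.card_image_of_injective _ (B.orderEmbOfFin _).injective, he])
      Finset.univ (by simp [hcover, hm])
    rw [hcover, Finset.coe_univ, Set.injOn_univ] at hinj
    obtain ⟨e, he, hce⟩ := hf f hinj
    exact hce (hfc e he)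
  refine le_antisymm (Nat.sInf_le hupper) (le_csInf ⟨_, hupper⟩ fun p hp => ?_)
  by_contra! hlt
  rcases hp (fun e => decide (∀ x ∈ e, ∀ y ∈ e, (x : ℕ) / (m - 1) = y / (m - 1))) with
    ⟨f, hinj, hf⟩ | ⟨g, hinj, hg⟩
  · have hconst := hl.eq_of_forall_edge_eq (fun x => (f x : ℕ) / (m - 1)) (fun e he x hx y hy =>
      of_decide_eq_true (hf e he) _ (Finset.mem_image_of_mem f hx) _
        (Finset.mem_image_of_mem f hy))
    simp only [hcover, Finset.mem_univ, true_imp_iff] at hconst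
    have hle : Fintype.card V ≤ (Finset.range (m - 1)).card := by
      refine Finset.card_le_card_of_injOn (s := Finset.univ) (fun x => (f x : ℕ) % (m - 1))
        (fun x _ => ?_) (fun x _ y _ hxy => hinj (Fin.ext ?_))
      · simpa using Nat.mod_lt _ (by omega)
      · rw [← Nat.div_add_mod (f x : ℕ) (m - 1), ← Nat.div_add_mod (f y : ℕ) (m - 1),
          hconst x y]
        simpa using hxy
    rw [Finset.card_range] at hle
    omega
  · obtain ⟨q, -, hq⟩ := Finset.exists_lt_card_fiber_of_mul_lt_card_of_maps_to
      (s := (Finset.univ : Finset (Fin n))) (t := Finset.range k) (n := r - 1)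
      (f := fun i => (g i : ℕ) / (m - 1))
      (fun i _ => by
        have := (g i).2
        exact Finset.mem_coe.mpr (Finset.mem_range.mpr (Nat.div_lt_of_lt_mul (by omega))))
      (by rw [Finset.card_range, Finset.card_univ, Fintype.card_fin, mul_comm]; omega)
    obtain ⟨e, hesub, he⟩ := Finset.exists_subset_card_eq (Nat.le_of_pred_lt hq)
    refine of_decide_eq_false (hg e he) fun x hx y hy => ?_
    obtain ⟨i, hi, rfl⟩ := Finset.mem_image.mp hx
    obtain ⟨j, hj, rfl⟩ := Finset.mem_image.mp hy
    exact (Finset.mem_filter.mp (hesub hi)).2.trans (Finset.mem_filter.mp (hesub hj)).2.symm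
end
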